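/- Let (G_n) be a sequence of connected d-regular simple graphs on n vertices with d = d(n) → ∞ and ε = ε(n) ∈ (0,1), satisfying properties P1, P2 and P3. Then there exist a constant C and n₀ such that for all n ≥ n₀, every vertex v, every nonempty subset C' of the neighbourhood N(v), and every starting vertex u ∈ C', the expected number of visits to C' within the mixing time satisfies |R_{C'} − 2| ≤ C/d, where R_{C'} = Σ_{k=0}^{T} Pr(W_u(k) ∈ C') for the lazy walk W_u started at u. -/

import Mathlib

open Finset Filter

noncomputable section
open scoped Classical

variable {V : Type*} [Fintype V] [DecidableEq V]

/-- Transition matrix of the simple random walk on a `d`-regular graph `G`: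
from `u` the walk moves to a uniformly random neighbour. -/
def simpleStep (G : SimpleGraph V) (d : ℕ) : Matrix V V ℝ :=
  Matrix.of fun u v => if G.Adj u v then ((d : ℝ))⁻¹ else 0

/-- Transition matrix of the lazy random walk `M = (1/2)(I + A/d)`. -/
def lazyStep (G : SimpleGraph V) (d : ℕ) : Matrix V V ℝ :=
  Matrix.of fun u v =>
    (if u = v then (2 : ℝ)⁻¹ else 0) + (2 : ℝ)⁻¹ * (if G.Adj u v then ((d : ℝ))⁻¹ else 0)

/-- Probability that the first `t` steps of the Markov chain with transition
matrix `M` started at `u` form a trajectory satisfying `E`:  the sum, over all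
paths realizing the event, of the product of the transition probabilities. -/
def walkProb (M : Matrix V V ℝ) (u : V) (t : ℕ)
    (E : (Fin (t + 1) → V) → Prop) : ℝ :=
  ∑ p : Fin (t + 1) → V,
    if p 0 = u ∧ E p then ∏ i : Fin t, M (p i.castSucc) (p i.succ) else 0

/-- The mixing time `T = min { t ≥ 1 : |M^t x y - 1/n| ≤ n⁻³ for all x,y }`. -/
def mixingTime (G : SimpleGraph V) (d : ℕ) : ℕ :=
  sInf {T : ℕ | 1 ≤ T ∧ ∀ x y : V,
    |((lazyStep G d) ^ T) x y - ((Fintype.card V : ℝ))⁻¹| ≤ (((Fintype.card V : ℝ)) ^ 3)⁻¹}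

/-- Property P1: the second largest eigenvalue of the lazy walk matrix is at
most `1 - g`, stated via the Rayleigh quotient on the orthogonal complement of
the constant (top) eigenvector. -/
def SpectralGapLB (G : SimpleGraph V) (d : ℕ) (g : ℝ) : Prop :=
  ∀ x : V → ℝ, (∑ v : V, x v) = 0 →
    (∑ u : V, ∑ v : V, x u * lazyStep G d u v * x v) ≤ (1 - g) * ∑ v : V, x v ^ 2

/-- Property P3 with constant `ρ₂`: for vertices `u,v` at distance at most
`d^ε`, the number of neighbours `w` of `v` with `dist w u ≤ dist u v` is at
most `ρ₂ · dist u v`. -/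
def PropP3 (G : SimpleGraph V) (d : ℕ) (ε ρ₂ : ℝ) : Prop :=
  ∀ u v : V, (G.dist u v : ℝ) ≤ (d : ℝ) ^ ε →
    (((univ : Finset V).filter fun w => G.Adj v w ∧ G.dist w u ≤ G.dist u v).card : ℝ) ≤
      ρ₂ * (G.dist u v : ℝ)

/-- The number of edges of `G` with both endpoints in `S`. -/
def edgesInside (G : SimpleGraph V) (S : Finset V) : ℕ :=
  ((S ×ˢ S).filter fun p => G.Adj p.1 p.2).card / 2

/-- The set of vertices of `G` not visited by the trajectory `p` at any step
`s` with `t₀ ≤ s` contains a connected (in the induced subgraph) subset of at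
least `K` vertices; equivalently, the subgraph induced by this vacant set has a
connected component with at least `K` vertices. -/
def bigVacantComponent (G : SimpleGraph V) {t : ℕ} (p : Fin (t + 1) → V)
    (t₀ : ℕ) (K : ℝ) : Prop :=
  ∃ S : Finset V, (∀ v ∈ S, ∀ s : Fin (t + 1), t₀ ≤ (s : ℕ) → p s ≠ v) ∧
    (G.induce (S : Set V)).Connected ∧ K ≤ (S.card : ℝ)

/-!
Staying put at `u` alone contributes `∑ 2⁻ᵏ = 2` up to `2⁻ᵀ`, and `2⁻ᵀ ≤ (M ^ T) u u = O(1/d)` by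
mixing; this is the lower bound.

For the upper bound, P3 says that from distance `j` to `v` all but `O(j)` of the `d` edges lead
outwards. Hence the function `a ^ (j - 1) * j!` of the distance, with `a = 2ρ₂/d`, satisfies
`(1 - O(1/d)) 1_{N(v)} / 2 + M f ≤ f` inside the ball of radius `L = ⌊log log n⌋` about `v`. Summing
along the walk bounds the expected number of visits to `N(v)` by `2 f(u) / (1 - O(1/d))`, where
`f(u) = 1`. Freezing the function outside the ball costs an error of at most `(a L) ^ (L - 2)` per
step. Since P2 makes `L` smaller than `√d`, this is smaller than any fixed power of `1/d` times
`exp (-L) ≈ 1 / log n`, which pays for the `T = O(d ^ ρ₁ log n)` steps allowed by the spectral gap.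
-/

section Stochastic

open Matrix

variable {α : Type*} [Fintype α] [DecidableEq α] {M P : Matrix α α ℝ}

lemma mem_rowStochastic_of_mem_doublyStochastic (hM : M ∈ doublyStochastic ℝ α) :
    M ∈ rowStochastic ℝ α :=
  (mem_doublyStochastic_iff_mem_rowStochastic_and_mem_colStochastic.1 hM).1

lemma mulVec_apply_le_of_mem_rowStochastic (hP : P ∈ rowStochastic ℝ α) {f : α → ℝ} {x : α}
    {B : ℝ} (hf : ∀ y, P x y ≠ 0 → f y ≤ B) : (P *ᵥ f) x ≤ B :=
  calc ∑ y, P x y * f y ≤ ∑ y, P x y * B := by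
        refine sum_le_sum fun y _ => ?_
        by_cases h : P x y = 0
        · simp [h]
        · exact mul_le_mul_of_nonneg_left (hf y h) (hP.1 x y)
    _ = B := by rw [← sum_mul, sum_row_of_mem_rowStochastic hP, one_mul]

lemma dotProduct_self_mulVec_le (hP : P ∈ doublyStochastic ℝ α) (f : α → ℝ) :
    (P *ᵥ f) ⬝ᵥ (P *ᵥ f) ≤ f ⬝ᵥ f := by
  have jensen (x : α) : (P *ᵥ f) x * (P *ᵥ f) x ≤ (P *ᵥ fun y => f y * f y) x := by
    simp only [← sq]
    exact Real.pow_arith_mean_le_arith_mean_pow_of_even univ _ f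
      (fun y _ => nonneg_of_mem_doublyStochastic hP) (sum_row_of_mem_doublyStochastic hP x) even_two
  calc (P *ᵥ f) ⬝ᵥ (P *ᵥ f) ≤ ∑ x, (P *ᵥ fun y => f y * f y) x := sum_le_sum fun x _ => jensen x
    _ = f ⬝ᵥ f := sum_mulVec_of_mem_doublyStochastic hP

/-- Polarization: `⟪f, M f⟫ - ⟪M f, M f⟫ = (⟪f, f⟫ - ⟪P f, P f⟫) / 4`. -/
lemma dotProduct_self_lazy_mulVec_le (hP : P ∈ doublyStochastic ℝ α)
    (hM : M = (2⁻¹ : ℝ) • (1 + P)) (f : α → ℝ) :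
    (M *ᵥ f) ⬝ᵥ (M *ᵥ f) ≤ f ⬝ᵥ (M *ᵥ f) := by
  have hMf : M *ᵥ f = (2⁻¹ : ℝ) • (f + P *ᵥ f) := by
    rw [hM, smul_mulVec, add_mulVec, one_mulVec]
  have hPf := dotProduct_self_mulVec_le hP f
  simp only [hMf, smul_dotProduct, dotProduct_smul, add_dotProduct, dotProduct_add, smul_eq_mul,
    dotProduct_comm (P *ᵥ f) f]
  linarith

section Mixing

variable {θ : ℝ} (hM : M ∈ doublyStochastic ℝ α) (hθ : 0 ≤ θ)
  (hcontr : ∀ f : α → ℝ, ∑ x, f x = 0 → (M *ᵥ f) ⬝ᵥ (M *ᵥ f) ≤ θ * (f ⬝ᵥ f))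
include hM hθ hcontr

lemma dotProduct_self_pow_mulVec_le {f : α → ℝ} (hf : ∑ x, f x = 0) (k : ℕ) :
    (M ^ k *ᵥ f) ⬝ᵥ (M ^ k *ᵥ f) ≤ θ ^ k * (f ⬝ᵥ f) := by
  induction k with
  | zero => simp
  | succ k ih =>
    have hk : ∑ x, (M ^ k *ᵥ f) x = 0 := by
      rw [sum_mulVec_of_mem_doublyStochastic (pow_mem hM k), hf]
    calc (M ^ (k + 1) *ᵥ f) ⬝ᵥ (M ^ (k + 1) *ᵥ f)
        = (M *ᵥ (M ^ k *ᵥ f)) ⬝ᵥ (M *ᵥ (M ^ k *ᵥ f)) := by rw [pow_succ', mulVec_mulVec]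
      _ ≤ θ * ((M ^ k *ᵥ f) ⬝ᵥ (M ^ k *ᵥ f)) := hcontr _ hk
      _ ≤ θ * (θ ^ k * (f ⬝ᵥ f)) := by gcongr
      _ = θ ^ (k + 1) * (f ⬝ᵥ f) := by ring

/-- Apply the contraction to the centred point mass `δ_y - 1 / |α|`. -/
lemma sq_pow_apply_sub_inv_card_le (k : ℕ) (x y : α) :
    ((M ^ k) x y - (Fintype.card α : ℝ)⁻¹) ^ 2 ≤ θ ^ k := by
  have : Nonempty α := ⟨x⟩
  have hcard : (Fintype.card α : ℝ) ≠ 0 := by positivity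
  set z : α → ℝ := Pi.single y 1 - (Fintype.card α : ℝ)⁻¹ • 1 with hz
  have hz_sum : ∑ w, z w = 0 := by simp [hz, hcard]
  have hz_norm : z ⬝ᵥ z ≤ 1 := by
    have : z ⬝ᵥ z = 1 - (Fintype.card α : ℝ)⁻¹ := by
      simp [hz, hcard]
    rw [this]
    simp
  have hMz : (M ^ k *ᵥ z) x = (M ^ k) x y - (Fintype.card α : ℝ)⁻¹ := by
    simp [hz, mulVec_sub, mulVec_smul, mulVec_one_of_mem_doublyStochastic (pow_mem hM k)]
  calc ((M ^ k) x y - (Fintype.card α : ℝ)⁻¹) ^ 2 = (M ^ k *ᵥ z) x * (M ^ k *ᵥ z) x := by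
        rw [hMz, sq]
    _ ≤ (M ^ k *ᵥ z) ⬝ᵥ (M ^ k *ᵥ z) :=
        single_le_sum (f := fun w => (M ^ k *ᵥ z) w * (M ^ k *ᵥ z) w)
          (fun w _ => mul_self_nonneg _) (mem_univ x)
    _ ≤ θ ^ k * (z ⬝ᵥ z) := dotProduct_self_pow_mulVec_le hM hθ hcontr hz_sum k
    _ ≤ θ ^ k := mul_le_of_le_one_right (pow_nonneg hθ k) hz_norm

end Mixing

/-- The expected number of visits to `S` at the steps `0, …, t` of the Markov chain with transition
matrix `M` started at `u`; the paper's `R_S` when `t` is the mixing time. -/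
def expectedVisits (M : Matrix α α ℝ) (t : ℕ) (u : α) (S : Finset α) : ℝ :=
  ∑ k ∈ range (t + 1), ∑ w ∈ S, (M ^ k) u w

/-- `M ^ k s ≤ M ^ k f - M ^ (k + 1) f + δ`, and these bounds telescope. -/
lemma sum_pow_mulVec_le_of_supersolution (hM : M ∈ rowStochastic ℝ α) {s f : α → ℝ} {δ : ℝ}
    (hf : ∀ x, 0 ≤ f x) (hsuper : ∀ x, s x + (M *ᵥ f) x ≤ f x + δ) (t : ℕ) (x : α) :
    ∑ k ∈ range t, (M ^ k *ᵥ s) x ≤ f x + t * δ := by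
  have hstep (k : ℕ) : (M ^ k *ᵥ s) x ≤ (M ^ k *ᵥ f) x - (M ^ (k + 1) *ᵥ f) x + δ := by
    have hslack : 0 ≤ (M ^ k *ᵥ (f + δ • 1 - (s + M *ᵥ f))) x :=
      nonneg_mulVec_of_mem_rowStochastic (pow_mem hM k)
        (fun y => by simpa using hsuper y) x
    simp only [mulVec_sub, mulVec_add, mulVec_smul, mulVec_mulVec, ← pow_succ,
      one_vecMul_of_mem_rowStochastic (pow_mem hM k), Pi.sub_apply, Pi.add_apply, Pi.smul_apply,
      Pi.one_apply, smul_eq_mul, mul_one] at hslack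
    linarith
  calc ∑ k ∈ range t, (M ^ k *ᵥ s) x
      ≤ ∑ k ∈ range t, ((M ^ k *ᵥ f) x - (M ^ (k + 1) *ᵥ f) x + δ) :=
        sum_le_sum fun k _ => hstep k
    _ = f x - (M ^ t *ᵥ f) x + t * δ := by
        rw [sum_add_distrib, sum_range_sub' fun k => (M ^ k *ᵥ f) x]
        simp
    _ ≤ f x + t * δ := by
        have := nonneg_mulVec_of_mem_rowStochastic (pow_mem hM t) hf x
        linarith

lemma mul_expectedVisits_le_of_supersolution (hM : M ∈ rowStochastic ℝ α) {S : Finset α}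
    {f : α → ℝ} {κ δ : ℝ} (hf : ∀ x, 0 ≤ f x)
    (hsuper : ∀ x, (if x ∈ S then κ else 0) + (M *ᵥ f) x ≤ f x + δ) (t : ℕ) (u : α) :
    κ * expectedVisits M t u S ≤ f u + (t + 1) * δ := by
  have h := sum_pow_mulVec_le_of_supersolution hM hf hsuper (t + 1) u
  simp only [mulVec, dotProduct, mul_ite, mul_zero, sum_ite_mem, univ_inter, ← sum_mul] at h
  rw [mul_comm]
  exact_mod_cast h

section Laziness

variable (hM : M ∈ rowStochastic ℝ α) (hlazy : ∀ x, 2⁻¹ ≤ M x x)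
include hM hlazy

lemma inv_two_pow_le_pow_apply_self (k : ℕ) (x : α) : (2⁻¹ : ℝ) ^ k ≤ (M ^ k) x x := by
  induction k with
  | zero => simp
  | succ k ih =>
    have hMk : ∀ y z, 0 ≤ (M ^ k) y z := (pow_mem hM k).1
    calc (2⁻¹ : ℝ) ^ (k + 1) ≤ (M ^ k) x x * M x x := by
          rw [pow_succ]
          exact mul_le_mul ih (hlazy x) (by norm_num) (hMk x x)
      _ ≤ (M ^ (k + 1)) x x := by
          rw [pow_succ, mul_apply]
          exact single_le_sum (f := fun y => (M ^ k) x y * M y x)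
            (fun y _ => mul_nonneg (hMk x y) (hM.1 y x)) (mem_univ x)

lemma two_sub_pow_apply_self_le_expectedVisits {S : Finset α} {u : α} (hu : u ∈ S) (t : ℕ) :
    2 - (M ^ t) u u ≤ expectedVisits M t u S :=
  calc 2 - (M ^ t) u u ≤ 2 - (2⁻¹ : ℝ) ^ t :=
        sub_le_sub_left (inv_two_pow_le_pow_apply_self hM hlazy t u) 2
    _ = ∑ k ∈ range (t + 1), (2⁻¹ : ℝ) ^ k := by
        rw [geom_sum_eq (by norm_num), pow_succ]
        ring
    _ ≤ expectedVisits M t u S := sum_le_sum fun k _ =>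
        (inv_two_pow_le_pow_apply_self hM hlazy k u).trans
          (single_le_sum (fun w _ => (pow_mem hM k).1 u w) hu)

end Laziness

end Stochastic

section LazyWalk

open Matrix

variable {G : SimpleGraph V} {d : ℕ}

omit [Fintype V] in
lemma lazyStep_eq_half_one_add_simpleStep (G : SimpleGraph V) (d : ℕ) :
    lazyStep G d = (2⁻¹ : ℝ) • (1 + simpleStep G d) := by
  ext x y
  simp [lazyStep, simpleStep, one_apply, mul_add]

omit [Fintype V] in
lemma inv_two_le_lazyStep_apply_self (G : SimpleGraph V) (d : ℕ) (x : V) :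
    2⁻¹ ≤ lazyStep G d x x := by
  simp [lazyStep]

omit [DecidableEq V] in
lemma natCast_le_card_of_isRegularOfDegree (hreg : G.IsRegularOfDegree d) (x : V) :
    (d : ℝ) ≤ Fintype.card V := by
  exact_mod_cast hreg.degree_eq x ▸ (G.degree_lt_card_verts x).le

variable (hreg : G.IsRegularOfDegree d) (hd : 0 < d)
include hreg hd

lemma simpleStep_mem_doublyStochastic : simpleStep G d ∈ doublyStochastic ℝ V := by
  have hrow (x : V) : ∑ y, simpleStep G d x y = 1 := by
    simp only [simpleStep, of_apply, ← sum_filter, sum_const, ← G.neighborFinset_eq_filter,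
      G.card_neighborFinset_eq_degree, hreg.degree_eq x, nsmul_eq_mul]
    exact mul_inv_cancel₀ (by positivity)
  refine mem_doublyStochastic_iff_sum.2 ⟨fun x y => ?_, hrow, fun y => ?_⟩
  · simp only [simpleStep, of_apply]
    positivity
  · simpa only [simpleStep, of_apply, G.adj_comm y] using hrow y

lemma lazyStep_mem_doublyStochastic : lazyStep G d ∈ doublyStochastic ℝ V := by
  rw [lazyStep_eq_half_one_add_simpleStep, smul_add]
  exact convex_doublyStochastic (one_mem _) (simpleStep_mem_doublyStochastic hreg hd)
    (by norm_num) (by norm_num) (by norm_num)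

lemma lazyStep_mem_rowStochastic : lazyStep G d ∈ rowStochastic ℝ V :=
  mem_rowStochastic_of_mem_doublyStochastic (lazyStep_mem_doublyStochastic hreg hd)

omit hreg hd in
lemma SpectralGapLB.mono {g g' : ℝ} (h : SpectralGapLB G d g) (hg : g' ≤ g) :
    SpectralGapLB G d g' := fun f hf =>
  (h f hf).trans <| mul_le_mul_of_nonneg_right (by linarith) (sum_nonneg fun _ _ => sq_nonneg _)

variable {g : ℝ} (hgap : SpectralGapLB G d g)
include hgap

lemma dotProduct_self_lazyStep_mulVec_le {f : V → ℝ} (hf : ∑ x, f x = 0) :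
    (lazyStep G d *ᵥ f) ⬝ᵥ (lazyStep G d *ᵥ f) ≤ (1 - g) * (f ⬝ᵥ f) := by
  refine (dotProduct_self_lazy_mulVec_le (simpleStep_mem_doublyStochastic hreg hd)
    (lazyStep_eq_half_one_add_simpleStep G d) f).trans ?_
  simpa only [dotProduct, mulVec, mul_sum, mul_assoc, sq] using hgap f hf

variable (hg0 : 0 < g) (hg1 : g ≤ 1)
include hg0 hg1

lemma abs_lazyStep_pow_sub_inv_card_le {t : ℕ} (ht : 6 * Real.log (Fintype.card V) / g ≤ t)
    (x y : V) :
    |(lazyStep G d ^ t) x y - (Fintype.card V : ℝ)⁻¹| ≤ ((Fintype.card V : ℝ) ^ 3)⁻¹ := by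
  have : Nonempty V := ⟨x⟩
  set N : ℝ := (Fintype.card V : ℝ)
  have hN0 : 0 < N := by positivity
  refine abs_le_of_sq_le_sq ?_ (by positivity)
  calc ((lazyStep G d ^ t) x y - N⁻¹) ^ 2 ≤ (1 - g) ^ t :=
        sq_pow_apply_sub_inv_card_le (lazyStep_mem_doublyStochastic hreg hd) (by linarith)
          (fun f hf => dotProduct_self_lazyStep_mulVec_le hreg hd hgap hf) t x y
    _ ≤ Real.exp (-g) ^ t := pow_le_pow_left₀ (by linarith) (Real.one_sub_le_exp_neg g) t
    _ ≤ Real.exp (-(6 * Real.log N)) := by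
        rw [← Real.exp_nat_mul, Real.exp_le_exp]
        linarith [(div_le_iff₀ hg0).1 ht]
    _ = ((N ^ 3)⁻¹) ^ 2 := by
        rw [Real.exp_neg, inv_pow, ← pow_mul, ← Real.exp_log hN0, ← Real.exp_nat_mul]
        simp

lemma abs_lazyStep_pow_mixingTime_sub_inv_card_le (x y : V) :
    |(lazyStep G d ^ mixingTime G d) x y - (Fintype.card V : ℝ)⁻¹| ≤
      ((Fintype.card V : ℝ) ^ 3)⁻¹ := by
  have hmixed : ∃ t : ℕ, 1 ≤ t ∧ ∀ x y : V,
      |(lazyStep G d ^ t) x y - (Fintype.card V : ℝ)⁻¹| ≤ ((Fintype.card V : ℝ) ^ 3)⁻¹ :=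
    ⟨⌈6 * Real.log (Fintype.card V) / g⌉₊ + 1, Nat.le_add_left _ _,
      abs_lazyStep_pow_sub_inv_card_le hreg hd hgap hg0 hg1
        ((Nat.le_ceil _).trans (mod_cast Nat.le_succ _))⟩
  exact (Nat.sInf_mem hmixed).2 x y

lemma mixingTime_le : (mixingTime G d : ℝ) ≤ 6 * Real.log (Fintype.card V) / g + 2 := by
  have hmix : mixingTime G d ≤ ⌈6 * Real.log (Fintype.card V) / g⌉₊ + 1 :=
    Nat.sInf_le ⟨Nat.le_add_left _ _, abs_lazyStep_pow_sub_inv_card_le hreg hd hgap hg0 hg1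
      ((Nat.le_ceil _).trans (mod_cast Nat.le_succ _))⟩
  have hceil := Nat.ceil_lt_add_one (show 0 ≤ 6 * Real.log (Fintype.card V) / g by positivity)
  have hmix' : (mixingTime G d : ℝ) ≤ ⌈6 * Real.log (Fintype.card V) / g⌉₊ + 1 := mod_cast hmix
  linarith

lemma lazyStep_pow_mixingTime_apply_self_le (x : V) :
    (lazyStep G d ^ mixingTime G d) x x ≤ 2 / d := by
  have : Nonempty V := ⟨x⟩
  have hN1 : (1 : ℝ) ≤ Fintype.card V := mod_cast Fintype.card_pos
  have hcube : ((Fintype.card V : ℝ) ^ 3)⁻¹ ≤ (Fintype.card V : ℝ)⁻¹ :=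
    inv_anti₀ (by positivity) (le_self_pow₀ hN1 (by norm_num))
  have hinv : (Fintype.card V : ℝ)⁻¹ ≤ (d : ℝ)⁻¹ :=
    inv_anti₀ (by positivity) (natCast_le_card_of_isRegularOfDegree hreg x)
  have habs := abs_lazyStep_pow_mixingTime_sub_inv_card_le hreg hd hgap hg0 hg1 x x
  rw [div_eq_mul_inv]
  linarith [le_abs_self ((lazyStep G d ^ mixingTime G d) x x - (Fintype.card V : ℝ)⁻¹)]

end LazyWalk

/-- The radial profile `a ^ (j - 1) * j!`, frozen at `j = L`, whose composition with the distance to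
`v` is nearly superharmonic. Truncated subtraction gives it the value `1` at both `0` and `1`. -/
def factorialProfile (a : ℝ) (L j : ℕ) : ℝ :=
  a ^ (min j L - 1) * (Nat.factorial (min j L) : ℝ)

section FactorialProfile

variable {a : ℝ} {L j : ℕ}

lemma factorialProfile_nonneg (ha : 0 ≤ a) (L j : ℕ) : 0 ≤ factorialProfile a L j := by
  unfold factorialProfile
  positivity

@[simp]
lemma factorialProfile_zero (a : ℝ) (L : ℕ) : factorialProfile a L 0 = 1 := by
  simp [factorialProfile]

@[simp]
lemma factorialProfile_one (a : ℝ) (L : ℕ) : factorialProfile a L 1 = 1 := by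
  cases L <;> simp [factorialProfile]

lemma factorialProfile_of_le (a : ℝ) (h : L ≤ j) :
    factorialProfile a L j = factorialProfile a L L := by
  simp [factorialProfile, h]

lemma factorialProfile_succ (a : ℝ) (hj : 0 < j) (hjL : j < L) :
    factorialProfile a L (j + 1) = a * (j + 1) * factorialProfile a L j := by
  obtain ⟨i, rfl⟩ := Nat.exists_eq_add_one.2 hj
  simp only [factorialProfile, min_eq_left hjL.le, min_eq_left (Nat.succ_le_of_lt hjL),
    Nat.add_sub_cancel, Nat.factorial_succ]
  push_cast
  ring

lemma mul_succ_le_mul_of_lt (ha : 0 ≤ a) (hjL : j < L) : a * (j + 1) ≤ a * L :=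
  mul_le_mul_of_nonneg_left (mod_cast hjL) ha

lemma factorialProfile_antitone (ha : 0 ≤ a) (haL : a * L ≤ 1) :
    Antitone (factorialProfile a L) := by
  refine antitone_nat_of_succ_le fun j => ?_
  rcases Nat.eq_zero_or_pos j with rfl | hj
  · simp
  · rcases lt_or_ge j L with hjL | hLj
    · rw [factorialProfile_succ a hj hjL]
      exact mul_le_of_le_one_left (factorialProfile_nonneg ha L j)
        ((mul_succ_le_mul_of_lt ha hjL).trans haL)
    · rw [factorialProfile_of_le a hLj, factorialProfile_of_le a (hLj.trans j.le_succ)]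

lemma factorialProfile_succ_le_pow (ha : 0 ≤ a) (hjL : j < L) :
    factorialProfile a L (j + 1) ≤ (a * L) ^ j := by
  induction j with
  | zero => simp
  | succ j ih =>
    rw [factorialProfile_succ a j.succ_pos hjL, pow_succ']
    exact mul_le_mul (mul_succ_le_mul_of_lt ha hjL) (ih (by omega))
      (factorialProfile_nonneg ha L _) (by positivity)

/-- For `2 ≤ j < L` each of the two terms is at most half of the profile at `j`. The source term
comes from `j = 1`; at `j = L`, where the recursion stops, the error term absorbs the first summand.
-/
lemma factorialProfile_supersolution (ha : 0 ≤ a) (haL : a * L ≤ 1 / 2) (hL : 2 ≤ L)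
    (hjL : j ≤ L) :
    (if j = 1 then 1 - 5 / 2 * a else 0) + a * j / 2 * factorialProfile a L (j - 1) +
      factorialProfile a L (j + 1) ≤ factorialProfile a L j + factorialProfile a L (L - 1) := by
  have hnonneg := factorialProfile_nonneg ha L
  obtain rfl | rfl | hj : j = 0 ∨ j = 1 ∨ 2 ≤ j := by omega
  · simpa using hnonneg (L - 1)
  · rw [factorialProfile_succ a one_pos hL]
    simp only [if_true, Nat.sub_self, factorialProfile_zero, factorialProfile_one]
    push_cast
    linarith [hnonneg (L - 1)]
  rw [if_neg (by omega), zero_add]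
  obtain hjL | rfl := hjL.lt_or_eq
  · have hprev : factorialProfile a L j = a * j * factorialProfile a L (j - 1) := by
      obtain ⟨i, rfl⟩ := Nat.exists_eq_add_one.2 (show 0 < j by omega)
      rw [factorialProfile_succ a (by omega) (by omega)]
      push_cast
      rfl
    have hnext : factorialProfile a L (j + 1) ≤ 1 / 2 * factorialProfile a L j := by
      rw [factorialProfile_succ a (by omega) hjL]
      exact mul_le_mul_of_nonneg_right ((mul_succ_le_mul_of_lt ha hjL).trans haL) (hnonneg j)
    linarith [hnonneg (L - 1)]
  · have hback : a * j / 2 * factorialProfile a j (j - 1) ≤ factorialProfile a j (j - 1) :=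
      mul_le_of_le_one_left (hnonneg _) (by linarith)
    rw [factorialProfile_of_le a j.le_succ]
    linarith

end FactorialProfile

section RadialSupersolution

open Matrix

variable {G : SimpleGraph V} {d L : ℕ} {ε ρ : ℝ} {v : V}

omit [DecidableEq V] in
lemma simpleStep_mulVec_radial_le (hreg : G.IsRegularOfDegree d) (hd : 0 < d) {F : ℕ → ℝ}
    (hF : Antitone F) (hF0 : ∀ j, 0 ≤ F j) (v x : V) :
    (simpleStep G d *ᵥ fun y => F (G.dist v y)) x ≤
      #{w | G.Adj x w ∧ G.dist w v ≤ G.dist v x} / d * F (G.dist v x - 1) +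
        F (G.dist v x + 1) := by
  set j := G.dist v x
  have hterm (w : V) : simpleStep G d x w * F (G.dist v w) ≤
      (if G.Adj x w ∧ G.dist w v ≤ j then (d : ℝ)⁻¹ * F (j - 1) else 0) +
        simpleStep G d x w * F (j + 1) := by
    by_cases hw : G.Adj x w
    · have hdist := hw.diff_dist_adj (u := v)
      have hd0 : (0 : ℝ) ≤ (d : ℝ)⁻¹ := by positivity
      by_cases hwj : G.dist w v ≤ j
      · have hle : F (G.dist v w) ≤ F (j - 1) := hF (by omega)
        simp only [simpleStep, of_apply, hw, hwj, and_self, if_true]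
        nlinarith [hF0 (j + 1)]
      · rw [G.dist_comm] at hwj
        have hle : F (G.dist v w) ≤ F (j + 1) := hF (by omega)
        simp only [simpleStep, of_apply, hw, if_true]
        rw [if_neg (by rw [G.dist_comm]; tauto), zero_add]
        exact mul_le_mul_of_nonneg_left hle hd0
    · simp [simpleStep, hw]
  calc ∑ w, simpleStep G d x w * F (G.dist v w) ≤ _ := sum_le_sum fun w _ => hterm w
    _ = _ := by
        rw [sum_add_distrib, ← sum_filter, sum_const, ← sum_mul,
          sum_row_of_mem_doublyStochastic (simpleStep_mem_doublyStochastic hreg hd), nsmul_eq_mul]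
        ring

omit [DecidableEq V] in
/-- The exit from the ball of radius `L`, beyond which property P3 gives no control, costs the error
`factorialProfile (2 * ρ / d) L (L - 1)`. -/
lemma simpleStep_radial_supersolution (hreg : G.IsRegularOfDegree d) (hd : 0 < d) (hρ : 0 ≤ ρ)
    (hP3 : PropP3 G d ε ρ) (hLε : (L : ℝ) ≤ (d : ℝ) ^ ε) (hL : 2 ≤ L)
    (haL : 2 * ρ / d * L ≤ 1 / 2) (v x : V) :
    (if G.Adj v x then 1 - 5 / 2 * (2 * ρ / d) else 0) +
        (simpleStep G d *ᵥ fun y => factorialProfile (2 * ρ / d) L (G.dist v y)) x ≤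
      factorialProfile (2 * ρ / d) L (G.dist v x) + factorialProfile (2 * ρ / d) L (L - 1) := by
  set φ := factorialProfile (2 * ρ / d) L with hφ
  have ha : 0 ≤ 2 * ρ / d := by positivity
  have hnonneg : ∀ j, 0 ≤ φ j := factorialProfile_nonneg ha L
  have hanti : Antitone φ := factorialProfile_antitone ha (haL.trans (by norm_num))
  simp only [← SimpleGraph.dist_eq_one_iff_adj]
  rcases le_or_gt (G.dist v x) L with hxL | hxL
  · have hcount : (#{w | G.Adj x w ∧ G.dist w v ≤ G.dist v x} : ℝ) / d * φ (G.dist v x - 1) ≤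
        2 * ρ / d * G.dist v x / 2 * φ (G.dist v x - 1) := by
      refine mul_le_mul_of_nonneg_right ?_ (hnonneg _)
      calc _ ≤ ρ * G.dist v x / d := by
            gcongr
            exact hP3 v x (le_trans (mod_cast hxL) hLε)
        _ = _ := by ring
    linarith [simpleStep_mulVec_radial_le hreg hd hanti hnonneg v x,
      factorialProfile_supersolution ha haL hL hxL]
  · rw [if_neg (by omega), zero_add]
    have hflat : (simpleStep G d *ᵥ fun y => φ (G.dist v y)) x ≤ φ (G.dist v x) := by
      refine mulVec_apply_le_of_mem_rowStochastic (mem_rowStochastic_of_mem_doublyStochastic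
        (simpleStep_mem_doublyStochastic hreg hd)) fun w hw => ?_
      have hadj : G.Adj x w := by simpa [simpleStep, hd.ne'] using hw
      have hdist := hadj.diff_dist_adj (u := v)
      rw [hφ, factorialProfile_of_le _ hxL.le, factorialProfile_of_le _ (by omega)]
    linarith [hnonneg (L - 1)]

lemma mul_expectedVisits_lazyStep_le (hreg : G.IsRegularOfDegree d) (hd : 0 < d) (hρ : 0 ≤ ρ)
    (hP3 : PropP3 G d ε ρ) (hLε : (L : ℝ) ≤ (d : ℝ) ^ ε) (hL : 2 ≤ L)
    (haL : 2 * ρ / d * L ≤ 1 / 2) {S : Finset V} (hS : ∀ w ∈ S, G.Adj v w) {u : V} (hu : u ∈ S)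
    (t : ℕ) :
    (1 - 5 * ρ / d) * expectedVisits (lazyStep G d) t u S ≤
      2 + (t + 1) * factorialProfile (2 * ρ / d) L (L - 1) := by
  set φ := factorialProfile (2 * ρ / d) L with hφ
  have ha : 0 ≤ 2 * ρ / d := by positivity
  have hnonneg : ∀ j, 0 ≤ φ j := factorialProfile_nonneg ha L
  have hκ : 0 ≤ 1 - 5 * ρ / d := by
    have hL' : (2 : ℝ) ≤ L := mod_cast hL
    have : 5 * ρ / d = 5 / 2 * (2 * ρ / d) := by ring
    nlinarith
  have hsuper (x : V) : (if x ∈ S then (1 - 5 * ρ / d) / 2 else 0) +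
      (lazyStep G d *ᵥ fun y => φ (G.dist v y)) x ≤ φ (G.dist v x) + φ (L - 1) / 2 := by
    have hsource : (if x ∈ S then (1 - 5 * ρ / d) / 2 else 0) ≤
        (if G.Adj v x then 1 - 5 / 2 * (2 * ρ / d) else 0) / 2 := by
      have : 5 / 2 * (2 * ρ / d) = 5 * ρ / d := by ring
      rw [this]
      by_cases hx : x ∈ S
      · simp [hx, hS x hx]
      · rw [if_neg hx]
        positivity
    have hsimple := simpleStep_radial_supersolution hreg hd hρ hP3 hLε hL haL v x
    rw [lazyStep_eq_half_one_add_simpleStep, smul_mulVec, add_mulVec, one_mulVec]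
    simp only [Pi.smul_apply, Pi.add_apply, smul_eq_mul]
    linarith
  have hvisits := mul_expectedVisits_le_of_supersolution (lazyStep_mem_rowStochastic hreg hd)
    (fun x => hnonneg (G.dist v x)) hsuper t u
  rw [SimpleGraph.dist_eq_one_iff_adj.2 (hS u hu), hφ, factorialProfile_one, ← hφ] at hvisits
  linarith

end RadialSupersolution

section ReturnEstimate

variable {G : SimpleGraph V} {d m L : ℕ} {c ε ρ : ℝ}

lemma mixingTime_add_one_le (hreg : G.IsRegularOfDegree d) (hd : 0 < d) (hc : 0 < c) (hc1 : c ≤ 1)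
    (hgap : SpectralGapLB G d (c / (d : ℝ) ^ m)) {E : ℝ} (hE : 1 ≤ E)
    (hlog : Real.log (Fintype.card V) ≤ E) :
    (mixingTime G d : ℝ) + 1 ≤ (6 / c + 3) * ((d : ℝ) ^ m * E) := by
  have hdm : (1 : ℝ) ≤ (d : ℝ) ^ m := one_le_pow₀ (mod_cast hd)
  have hT := mixingTime_le hreg hd hgap (by positivity) (div_le_one_of_le₀ (hc1.trans hdm)
    (by positivity))
  have hmain : 6 * Real.log (Fintype.card V) / (c / (d : ℝ) ^ m) ≤ 6 / c * ((d : ℝ) ^ m * E) :=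
    calc _ = 6 / c * ((d : ℝ) ^ m * Real.log (Fintype.card V)) := by field_simp
      _ ≤ _ := by gcongr
  linarith [one_le_mul_of_one_le_of_one_le hdm hE]

/-- Up to constants the left side is `d ^ m * (e * a * L) ^ (L - 2)`, and `4 * (m + 1) ≤ L - 2`. -/
lemma pow_mul_exp_mul_factorialProfile_le {a : ℝ} (ha : 0 ≤ a) (hd : 0 < d)
    (hdecay : (Real.exp 1 * (a * L)) ^ 4 ≤ 1 / d) (hL : 4 * m + 6 ≤ L) :
    (d : ℝ) ^ m * Real.exp (L + 1) * factorialProfile a L (L - 1) ≤ Real.exp 3 / d := by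
  obtain ⟨i, rfl⟩ : ∃ i, L = i + 2 := Nat.exists_eq_add_of_le' (by omega)
  set b := Real.exp 1 * (a * (i + 2 : ℕ)) with hb
  have hb0 : 0 ≤ b := by positivity
  have hd1 : (1 : ℝ) ≤ d := mod_cast hd
  have hb1 : b ≤ 1 := (pow_le_one_iff_of_nonneg hb0 (by norm_num)).1
    (hdecay.trans (div_le_one_of_le₀ hd1 (by positivity)))
  have hexp : Real.exp ((i + 2 : ℕ) + 1) = Real.exp 3 * Real.exp 1 ^ i := by
    rw [← Real.exp_nat_mul, ← Real.exp_add]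
    push_cast
    ring_nf
  calc (d : ℝ) ^ m * Real.exp ((i + 2 : ℕ) + 1) * factorialProfile a (i + 2) (i + 1)
      ≤ (d : ℝ) ^ m * Real.exp ((i + 2 : ℕ) + 1) * (a * (i + 2 : ℕ)) ^ i := by
        gcongr
        exact factorialProfile_succ_le_pow ha (by omega)
    _ = (d : ℝ) ^ m * Real.exp 3 * b ^ i := by rw [hexp, hb, mul_pow]; ring
    _ ≤ (d : ℝ) ^ m * Real.exp 3 * (b ^ 4) ^ (m + 1) := by
        rw [← pow_mul]
        exact mul_le_mul_of_nonneg_left (pow_le_pow_of_le_one hb0 hb1 (by omega)) (by positivity)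
    _ ≤ (d : ℝ) ^ m * Real.exp 3 * (1 / d) ^ (m + 1) := by gcongr
    _ = Real.exp 3 / d := by
        rw [one_div, inv_pow, pow_succ]
        field_simp

lemma mixingTime_add_one_mul_factorialProfile_le (hreg : G.IsRegularOfDegree d) (hd : 0 < d)
    (hc : 0 < c) (hc1 : c ≤ 1) (hgap : SpectralGapLB G d (c / (d : ℝ) ^ m)) (hL : 4 * m + 6 ≤ L)
    (hlog : Real.log (Fintype.card V) ≤ Real.exp (L + 1)) {a : ℝ} (ha : 0 ≤ a)
    (hdecay : (Real.exp 1 * (a * L)) ^ 4 ≤ 1 / d) :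
    ((mixingTime G d : ℝ) + 1) * factorialProfile a L (L - 1) ≤ (6 / c + 3) * Real.exp 3 / d :=
  calc ((mixingTime G d : ℝ) + 1) * factorialProfile a L (L - 1)
      ≤ (6 / c + 3) * ((d : ℝ) ^ m * Real.exp (L + 1)) * factorialProfile a L (L - 1) :=
        mul_le_mul_of_nonneg_right (mixingTime_add_one_le hreg hd hc hc1 hgap
          (Real.one_le_exp (by positivity)) hlog) (factorialProfile_nonneg ha L _)
    _ ≤ (6 / c + 3) * (Real.exp 3 / d) := by
        rw [mul_assoc]
        exact mul_le_mul_of_nonneg_left (pow_mul_exp_mul_factorialProfile_le ha hd hdecay hL)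
          (by positivity)
    _ = (6 / c + 3) * Real.exp 3 / d := by ring

lemma exp_one_mul_pow_four_le (hd : 0 < d) (hLd : (L : ℝ) ^ 2 ≤ d)
    (hρd : (2 * ρ * Real.exp 1) ^ 4 ≤ d) : (Real.exp 1 * (2 * ρ / d * L)) ^ 4 ≤ 1 / d :=
  calc (Real.exp 1 * (2 * ρ / d * L)) ^ 4
      = (2 * ρ * Real.exp 1) ^ 4 * ((L : ℝ) ^ 2) ^ 2 / (d : ℝ) ^ 4 := by ring
    _ ≤ d * (d : ℝ) ^ 2 / (d : ℝ) ^ 4 := by gcongr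
    _ = 1 / d := by field_simp

lemma le_half_of_exp_one_mul_pow_le_one {b : ℝ} (hb : 0 ≤ b) {k : ℕ} (hk : k ≠ 0)
    (h : (Real.exp 1 * b) ^ k ≤ 1) : b ≤ 1 / 2 := by
  have he : 2 ≤ Real.exp 1 := by linarith [Real.add_one_le_exp (1 : ℝ)]
  have := (pow_le_one_iff_of_nonneg (by positivity) hk).1 h
  nlinarith

lemma le_two_add_of_one_sub_mul_le {x τ R : ℝ} (hx : 0 ≤ x) (hx2 : x ≤ 1 / 2) (hτ : 0 ≤ τ)
    (hR : (1 - x) * R ≤ 2 + τ) : R ≤ 2 + 4 * x + 2 * τ := by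
  have hinv : 2 + τ ≤ (1 - x) * (2 + 4 * x + 2 * τ) := by nlinarith
  exact le_of_mul_le_mul_left (hR.trans hinv) (by linarith)

lemma abs_expectedVisits_lazyStep_sub_two_le (hreg : G.IsRegularOfDegree d) (hd : 0 < d)
    (hc : 0 < c) (hc1 : c ≤ 1) (hgap : SpectralGapLB G d (c / (d : ℝ) ^ m)) (hρ : 0 ≤ ρ)
    (hP3 : PropP3 G d ε ρ) (hε : ε ≤ 1) (hL : 4 * m + 6 ≤ L) (hLε : (L : ℝ) ^ 2 ≤ (d : ℝ) ^ ε)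
    (hlog : Real.log (Fintype.card V) ≤ Real.exp (L + 1)) (hρd : (2 * ρ * Real.exp 1) ^ 4 ≤ d)
    {v u : V} {S : Finset V} (hS : ∀ w ∈ S, G.Adj v w) (hu : u ∈ S) :
    |expectedVisits (lazyStep G d) (mixingTime G d) u S - 2| ≤
      (2 + 20 * ρ + 2 * (6 / c + 3) * Real.exp 3) / d := by
  set a : ℝ := 2 * ρ / d with ha
  have ha0 : 0 ≤ a := by positivity
  have hd1 : (1 : ℝ) ≤ d := mod_cast hd
  have hL6 : (6 : ℝ) ≤ L := mod_cast (show 6 ≤ L by omega)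
  have hLd : (L : ℝ) ^ 2 ≤ d := hLε.trans (Real.rpow_le_self_of_one_le hd1 hε)
  have hdecay := exp_one_mul_pow_four_le hd hLd hρd
  have haL : a * L ≤ 1 / 2 := le_half_of_exp_one_mul_pow_le_one (by positivity) four_ne_zero
    (hdecay.trans (div_le_one_of_le₀ hd1 (by positivity)))
  have hexit := mixingTime_add_one_mul_factorialProfile_le hreg hd hc hc1 hgap hL hlog ha0 hdecay
  have hupper := le_two_add_of_one_sub_mul_le (x := 5 * ρ / d) (by positivity)
    (by rw [show 5 * ρ / d = 5 / 2 * a by rw [ha]; ring]; nlinarith)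
    (mul_nonneg (by positivity) (factorialProfile_nonneg ha0 L _))
    (mul_expectedVisits_lazyStep_le hreg hd hρ hP3 (by nlinarith) (by omega) haL hS hu
      (mixingTime G d))
  have hlower := two_sub_pow_apply_self_le_expectedVisits (lazyStep_mem_rowStochastic hreg hd)
    (inv_two_le_lazyStep_apply_self G d) hu (mixingTime G d)
  have hdiag := lazyStep_pow_mixingTime_apply_self_le hreg hd hgap (by positivity)
    (div_le_one_of_le₀ (hc1.trans (one_le_pow₀ hd1)) (by positivity)) u
  have hsplit : (2 + 20 * ρ + 2 * (6 / c + 3) * Real.exp 3) / d =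
      2 / d + 4 * (5 * ρ / d) + 2 * ((6 / c + 3) * Real.exp 3 / d) := by ring
  have hnonneg : 0 ≤ 2 / (d : ℝ) ∧ 0 ≤ 5 * ρ / d ∧ 0 ≤ (6 / c + 3) * Real.exp 3 / d :=
    ⟨by positivity, by positivity, by positivity⟩
  rw [hsplit, abs_le]
  constructor <;> linarith

end ReturnEstimate

section Asymptotics

lemma sq_le_rpow_of_rpow_two_div_le {ℓ x ε : ℝ} (hℓ : 0 ≤ ℓ) (hε : 0 < ε)
    (h : ℓ ^ (2 / ε) ≤ x) : ℓ ^ 2 ≤ x ^ ε :=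
  calc ℓ ^ 2 = (ℓ ^ (2 / ε)) ^ ε := by
        rw [← Real.rpow_mul hℓ, div_mul_cancel₀ _ hε.ne', Real.rpow_two]
    _ ≤ x ^ ε := Real.rpow_le_rpow (by positivity) h hε.le

lemma min_one_div_pow_ceil_le {c x r : ℝ} (hc : 0 < c) (hx : 1 ≤ x) :
    min c 1 / x ^ ⌈r⌉₊ ≤ c / x ^ r := by
  rw [← Real.rpow_natCast]
  gcongr
  · exact min_le_left c 1
  · exact Nat.le_ceil r

lemma log_le_exp_floor_log_log_add_one {x : ℝ} (hx : 0 < Real.log x) :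
    Real.log x ≤ Real.exp (⌊Real.log (Real.log x)⌋₊ + 1) := by
  rw [← Real.log_le_iff_le_exp hx]
  exact (Nat.lt_floor_add_one _).le

lemma eventually_le_log_log_and_log_pos (B : ℝ) :
    ∀ᶠ x : ℝ in atTop, B ≤ Real.log (Real.log x) ∧ 0 < Real.log x :=
  ((Real.tendsto_log_atTop.comp Real.tendsto_log_atTop).eventually_ge_atTop B).and
    (Real.tendsto_log_atTop.eventually_gt_atTop 0)

theorem expected_returns_to_neighbourhood_subset_general {ι : Type*} {l : Filter ι}
    {W : ι → Type*} [∀ i, Fintype (W i)] [∀ i, DecidableEq (W i)]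
    (G : ∀ i, SimpleGraph (W i)) (d : ι → ℕ) (ε : ι → ℝ)
    (hreg : ∀ i, (G i).IsRegularOfDegree (d i))
    (hd : Tendsto (fun i => (d i : ℝ)) l atTop)
    (hε : ∀ i, 0 < ε i ∧ ε i ≤ 1)
    (hP1 : ∃ c₁ ρ₁ : ℝ, 0 < c₁ ∧ ∀ i, SpectralGapLB (G i) (d i) (c₁ / (d i : ℝ) ^ ρ₁))
    (hP2 : Tendsto (fun i => Real.log (Real.log (Fintype.card (W i))) ^ (2 / ε i) / (d i : ℝ))
      l (nhds 0))
    (hP3 : ∃ ρ₂ : ℝ, 0 < ρ₂ ∧ ∀ i, PropP3 (G i) (d i) (ε i) ρ₂) :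
    ∃ C : ℝ, 0 < C ∧ ∀ᶠ i in l, ∀ v : W i, ∀ S : Finset (W i), (∀ w ∈ S, (G i).Adj v w) →
      ∀ u ∈ S, |expectedVisits (lazyStep (G i) (d i)) (mixingTime (G i) (d i)) u S - 2| ≤
        C / (d i : ℝ) := by
  obtain ⟨c, r, hc, hgap⟩ := hP1
  obtain ⟨ρ, hρ, hP3⟩ := hP3
  set m := ⌈r⌉₊
  obtain ⟨x₀, hx₀⟩ := eventually_atTop.1 (eventually_le_log_log_and_log_pos (4 * m + 6 : ℕ))
  refine ⟨2 + 20 * ρ + 2 * (6 / min c 1 + 3) * Real.exp 3, by positivity, ?_⟩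
  filter_upwards [hd.eventually_ge_atTop x₀, hd.eventually_ge_atTop 1,
    hd.eventually_ge_atTop ((2 * ρ * Real.exp 1) ^ 4), hP2.eventually (gt_mem_nhds one_pos)]
    with i hdx₀ hd1 hρd hsmall v S hS u hu
  have hd0 : 0 < d i := by exact_mod_cast one_pos.trans_le hd1
  have hcard := natCast_le_card_of_isRegularOfDegree (hreg i) v
  obtain ⟨hℓ, hlog⟩ := hx₀ _ (hdx₀.trans hcard)
  set ℓ := Real.log (Real.log (Fintype.card (W i)))
  have hℓ0 : 0 ≤ ℓ := (Nat.cast_nonneg _).trans hℓ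
  have hfloor : (⌊ℓ⌋₊ : ℝ) ^ 2 ≤ (d i : ℝ) ^ ε i :=
    (pow_le_pow_left₀ (Nat.cast_nonneg _) (Nat.floor_le hℓ0) 2).trans
      (sq_le_rpow_of_rpow_two_div_le hℓ0 (hε i).1 ((div_lt_one (by positivity)).1 hsmall).le)
  exact abs_expectedVisits_lazyStep_sub_two_le (hreg i) hd0 (lt_min hc one_pos) (min_le_right _ _)
    ((hgap i).mono (min_one_div_pow_ceil_le hc hd1)) hρ.le (hP3 i) (hε i).2 (Nat.le_floor hℓ)
    hfloor (log_le_exp_floor_log_log_add_one hlog) hρd hS hu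

end Asymptotics

/-- **Lemma 4(iii)**: for a sequence of connected `d`-regular graphs satisfying
P1, P2, P3, for any vertex `v`, nonempty `C' ⊆ N(v)` and start `u ∈ C'`, the
expected number of visits to `C'` within the mixing time by the lazy walk
satisfies `R_{C'} = 2 + O(1/d)`, uniformly. -/
theorem expected_returns_to_neighbourhood_subset
    (G : ∀ n : ℕ, SimpleGraph (Fin (n + 1))) (d : ℕ → ℕ) (ε : ℕ → ℝ)
    (hreg : ∀ n, (G n).IsRegularOfDegree (d n))
    (hconn : ∀ n, (G n).Connected)
    (hd : Tendsto (fun n => (d n : ℝ)) atTop atTop)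
    (hε : ∀ n, 0 < ε n ∧ ε n < 1)
    (hP1 : ∃ c₁ ρ₁ : ℝ, 0 < c₁ ∧ 0 < ρ₁ ∧ ρ₁ ≤ 3 ∧
      ∀ n, SpectralGapLB (G n) (d n) (c₁ / (d n : ℝ) ^ ρ₁))
    (hP2a : Tendsto (fun n : ℕ => Real.log (Real.log ((n : ℝ) + 1)) ^ (2 / ε n) / (d n : ℝ))
      atTop (nhds 0))
    (hP2b : ∃ c₂ : ℝ, 0 < c₂ ∧ ∀ n, 1 ≤ n →
      (d n : ℝ) ≤ c₂ * (((n : ℝ) + 1) / Real.log ((n : ℝ) + 1)) ^ ((1 : ℝ) / 5))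
    (hP3 : ∃ ρ₂ : ℝ, 0 < ρ₂ ∧ ∀ n, PropP3 (G n) (d n) (ε n) ρ₂)
    :
    ∃ C : ℝ, 0 < C ∧ ∃ n₀ : ℕ, ∀ n, n₀ ≤ n → ∀ v : Fin (n + 1),
      ∀ C' : Finset (Fin (n + 1)), C'.Nonempty → (∀ w ∈ C', (G n).Adj v w) →
        ∀ u ∈ C',
          |(∑ k ∈ Finset.range (mixingTime (G n) (d n) + 1),
              ∑ w ∈ C', ((lazyStep (G n) (d n)) ^ k) u w) - 2| ≤ C / (d n : ℝ) := by
  obtain ⟨c₁, ρ₁, hc₁, -, -, hgap⟩ := hP1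
  obtain ⟨C, hC, hbound⟩ := expected_returns_to_neighbourhood_subset_general G d ε hreg hd
    (fun n => ⟨(hε n).1, (hε n).2.le⟩) ⟨c₁, ρ₁, hc₁, hgap⟩ (by simpa using hP2a) hP3
  obtain ⟨n₀, hn₀⟩ := eventually_atTop.1 hbound
  exact ⟨C, hC, n₀, fun n hn v C' _ hadj u hu => hn₀ n hn v C' hadj u hu⟩

end
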